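/- Let m ≡ 0 (mod 4) with m ≥ 4, and let e be an integer with 2 ≤ e ≤ m/2 and gcd(m,e) = 2. Then the supports of the codewords of Hamming weight 4 in the extended code C̄_E form a 2-(2^m, 4, 1) design, i.e., a Steiner system S(2,4,2^m): every 2-element subset of the 2^m coordinate positions is contained in the support of exactly one codeword of Hamming weight 4 of C̄_E. -/

import Mathlib

open Polynomial Finset

/-- The polynomial `c₀ + c₁x + ⋯ + c_{n−1}x^{n−1}` associated to a vector. -/
noncomputable def codePoly {n : ℕ} (c : Fin n → ZMod 2) : Polynomial (ZMod 2) :=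
  ∑ i : Fin n, Polynomial.C (c i) * Polynomial.X ^ (i : ℕ)

/-- The generator polynomial `g_E(x) = M_α(x) · M_{α^{1+2^e}}(x)`. -/
noncomputable def gE (m e : ℕ) (α : GaloisField 2 m) : Polynomial (ZMod 2) :=
  minpoly (ZMod 2) α * minpoly (ZMod 2) (α ^ (1 + 2 ^ e))

/-- The binary cyclic code `C_E` of length `2^m − 1` with generator polynomial `g_E`. -/
def CE (m e : ℕ) (α : GaloisField 2 m) : Set (Fin (2 ^ m - 1) → ZMod 2) :=
  {c | gE m e α ∣ codePoly c}

/-- The extended code `C̄_E ⊆ F_2^{2^m}`: the first `2^m − 1` coordinates form a codeword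
of `C_E` and all `2^m` coordinates sum to zero. -/
def CEbar (m e : ℕ) (α : GaloisField 2 m) : Set (Fin (2 ^ m) → ZMod 2) :=
  {c | (fun i : Fin (2 ^ m - 1) => c (Fin.castLE (Nat.sub_le _ _) i)) ∈ CE m e α ∧
       ∑ i, c i = 0}

/-!
Label the coordinates by the elements of `F = GaloisField 2 m`, and let `φ x = x ^ 2 ^ e`. A set of
four points supports a codeword iff the sums of `x` and of `x * φ x` over it vanish. The first
condition makes it `{x, y, z, x + y + z}`; by polarization of the quadratic form `x * φ x` the
second becomes `(x + y) * φ (x + z) = (x + z) * φ (x + y)`, i.e. `(x + z) / (x + y)` is fixed by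
`φ`. The fixed field of `φ` has `2 ^ gcd(m, e)` elements, so there are `2 ^ gcd(m, e) - 2` choices
of `z` for given `x ≠ y`, and each block through `x` and `y` arises from two of them.

Divisibility by the product of the two minimal polynomials splits into two root conditions because
the factors are coprime: if `α` and `α * φ α` were conjugate, then an automorphism would agree with
`x ↦ x * φ x` on the powers of `α`, hence everywhere, and additivity of that map forces `φ = id`.
-/

section FixedPoints

theorem ncard_setOf_pow_eq_self {F : Type*} [Field F] [Finite F] {q : ℕ} (hq : q ≠ 0) :
    {t : F | t ^ q = t}.ncard = (Nat.card F - 1).gcd (q - 1) + 1 := by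
  have hunits : {t : F | t ^ q = t} =
      insert 0 (Units.val '' ((powMonoidHom (q - 1) : Fˣ →* Fˣ).ker : Set Fˣ)) := by
    obtain ⟨k, rfl⟩ := Nat.exists_eq_succ_of_ne_zero hq
    ext t
    rcases eq_or_ne t 0 with rfl | ht
    · simp
    · lift t to Fˣ using ht.isUnit
      simp [pow_succ, ← Units.val_pow_eq_pow_val, MonoidHom.mem_ker, Units.val_inj]
  rw [hunits, Set.ncard_insert_of_notMem (by simp),
    Set.ncard_image_of_injective _ Units.val_injective, ← Nat.card_units,
    ← IsCyclic.card_powMonoidHom_ker]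
  rfl

theorem ncard_setOf_pow_pow_eq_self {F : Type*} [Field F] [Finite F] {p m : ℕ}
    (hcard : Nat.card F = p ^ m) (e : ℕ) :
    {t : F | t ^ p ^ e = t}.ncard = p ^ m.gcd e := by
  have hp : p ≠ 0 := by
    rintro rfl
    exact (hcard ▸ Finite.one_lt_card (α := F)).not_ge (zero_pow_le_one m)
  rw [ncard_setOf_pow_eq_self (pow_ne_zero e hp), hcard, Nat.pow_sub_one_gcd_pow_sub_one,
    Nat.sub_add_cancel (Nat.one_le_pow _ _ (Nat.pos_of_ne_zero hp))]

theorem iterateFrobenius_ne_id {F : Type*} [Field F] [Finite F] {p : ℕ} [Fact p.Prime] [CharP F p]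
    {m e : ℕ} (hcard : Nat.card F = p ^ m) (hme : ¬ m ∣ e) :
    iterateFrobenius F p e ≠ RingHom.id F := by
  intro h
  have hfix := ncard_setOf_pow_pow_eq_self hcard e
  simp only [← iterateFrobenius_def, h, RingHom.id_apply, Set.ofPred_true, Set.ncard_univ,
    hcard] at hfix
  exact hme (Nat.gcd_eq_left_iff_dvd.1
    (Nat.pow_right_injective (Fact.out : p.Prime).two_le hfix).symm)

end FixedPoints

section Blocks

variable {F : Type*} [Field F]

/-- The blocks of a design with point set `F`: the four-element sets `B` on which both the sum of
the points and the sum of the values of the quadratic form `x ↦ x * φ x` vanish. For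
`φ x = x ^ 2 ^ e` these are the supports of the codewords of weight four of the extended code. -/
def IsBlock (φ : F →+* F) (B : Finset F) : Prop :=
  #B = 4 ∧ ∑ x ∈ B, x = 0 ∧ ∑ x ∈ B, x * φ x = 0

/-- The points `z` for which `x`, `y`, `z` lie on a common block, expressed by the affine coordinate
of `z` on the line through `x` and `y` being fixed by `φ`. -/
def thirdPoints (φ : F →+* F) (x y : F) : Set F :=
  {z | x ≠ z ∧ y ≠ z ∧ φ ((x + z) / (x + y)) = (x + z) / (x + y)}

/-- The blocks containing both `x` and `y`. -/
def blocksThrough (φ : F →+* F) (x y : F) : Set (Finset F) :=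
  {B | IsBlock φ B ∧ x ∈ B ∧ y ∈ B}

variable [CharP F 2] {φ : F →+* F} {x y z : F}

theorem add_add_notMem_of_pairwise_ne [DecidableEq F] (hxy : x ≠ y) (hxz : x ≠ z) (hyz : y ≠ z) :
    x + y + z ∉ ({x, y, z} : Finset F) := by
  have hx : x + y + z ≠ x := fun h => hyz (CharTwo.add_eq_zero.1 (by linear_combination h))
  have hy : x + y + z ≠ y := fun h => hxz (CharTwo.add_eq_zero.1 (by linear_combination h))
  have hz : x + y + z ≠ z := fun h => hxy (CharTwo.add_eq_zero.1 (by linear_combination h))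
  simp [hx, hy, hz]

theorem card_eq_four_and_sum_eq_zero_iff [DecidableEq F] (hxy : x ≠ y) (hxz : x ≠ z) (hyz : y ≠ z)
    {B : Finset F} (hB : {x, y, z} ⊆ B) :
    #B = 4 ∧ ∑ u ∈ B, u = 0 ↔ B = {x + y + z, x, y, z} := by
  have hsum : ∑ u ∈ {x, y, z}, u = x + y + z := by simp [*, add_assoc]
  have hcard : #{x, y, z} = 3 := card_eq_three.2 ⟨x, y, z, hxy, hxz, hyz, rfl⟩
  constructor
  · rintro ⟨hB4, hB0⟩
    obtain ⟨w, hw, rfl⟩ := exists_eq_insert_iff.2 ⟨hB, by rw [hcard, hB4]⟩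
    rw [sum_insert hw, hsum] at hB0
    rw [CharTwo.add_eq_zero.1 hB0]
  · rintro rfl
    have hw := add_add_notMem_of_pairwise_ne hxy hxz hyz
    rw [card_insert_of_notMem hw, sum_insert hw, hcard, hsum]
    exact ⟨rfl, CharTwo.add_self_eq_zero _⟩

theorem sum_mul_map_eq_zero_iff (hxy : x ≠ y) :
    (x + y + z) * φ (x + y + z) + (x * φ x + (y * φ y + z * φ z)) = 0 ↔
      φ ((x + z) / (x + y)) = (x + z) / (x + y) := by
  have two : (2 : F) = 0 := CharTwo.two_eq_zero
  have hb : x + y ≠ 0 := fun h => hxy (CharTwo.add_eq_zero.1 h)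
  have polarization : (x + y + z) * φ (x + y + z) + (x * φ x + (y * φ y + z * φ z)) =
      φ (x + z) * (x + y) - (x + z) * φ (x + y) := by
    simp only [map_add]
    linear_combination (x * φ x + y * φ y + z * φ z + x * φ y + z * φ x + z * φ y) * two
  rw [polarization, sub_eq_zero, map_div₀, div_eq_div_iff ((map_ne_zero φ).2 hb) hb]

theorem isBlock_iff_of_subset [DecidableEq F] (hxy : x ≠ y) (hxz : x ≠ z) (hyz : y ≠ z)
    {B : Finset F} (hB : {x, y, z} ⊆ B) :
    IsBlock φ B ↔
      B = {x + y + z, x, y, z} ∧ φ ((x + z) / (x + y)) = (x + z) / (x + y) := by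
  rw [IsBlock, ← and_assoc, card_eq_four_and_sum_eq_zero_iff hxy hxz hyz hB]
  refine and_congr_right fun h => ?_
  rw [h, sum_insert (add_add_notMem_of_pairwise_ne hxy hxz hyz), sum_insert (by simp [hxy, hxz]),
    sum_pair hyz, sum_mul_map_eq_zero_iff hxy]

theorem ncard_thirdPoints_add_two [Finite F] (hxy : x ≠ y) :
    (thirdPoints φ x y).ncard + 2 = {t | φ t = t}.ncard := by
  have hb : x + y ≠ 0 := fun h => hxy (CharTwo.add_eq_zero.1 h)
  let coord : F ≃ F := (Equiv.addLeft x).trans (Equiv.divRight₀ (x + y) hb)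
  have hx : φ (coord x) = coord x := by simp [coord, CharTwo.add_self_eq_zero]
  have hy : φ (coord y) = coord y := by
    have : coord y = 1 := div_self hb
    rw [this, map_one]
  have hpair : {x, y} ⊆ coord ⁻¹' {t | φ t = t} := Set.pair_subset_iff.2 ⟨hx, hy⟩
  have hsdiff : thirdPoints φ x y = coord ⁻¹' {t | φ t = t} \ {x, y} := by
    ext z
    simp only [thirdPoints, coord, Set.mem_ofPred_eq, Set.mem_sdiff, Set.mem_preimage,
      Set.mem_insert_iff, Set.mem_singleton_iff, Equiv.trans_apply, Equiv.coe_addLeft,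
      Equiv.divRight₀_apply]
    tauto
  rw [hsdiff, ← Set.ncard_pair hxy, Set.ncard_sdiff_add_ncard_of_subset hpair,
    Set.ncard_preimage_of_injective_subset_range coord.injective (by simp)]

theorem mem_thirdPoints_iff_of_mem_blocksThrough (hxy : x ≠ y) {B : Finset F}
    (hB : B ∈ blocksThrough φ x y) (hz : z ∈ B) : z ∈ thirdPoints φ x y ↔ x ≠ z ∧ y ≠ z := by
  classical
  obtain ⟨hblock, hx, hy⟩ := hB
  refine ⟨fun h => ⟨h.1, h.2.1⟩, fun ⟨hxz, hyz⟩ => ⟨hxz, hyz, ?_⟩⟩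
  have hsub : {x, y, z} ⊆ B := by simp [insert_subset_iff, *]
  exact ((isBlock_iff_of_subset hxy hxz hyz hsub).1 hblock).2

theorem mem_blocksThrough_and_mem_iff [DecidableEq F] (hxy : x ≠ y) (hz : z ∈ thirdPoints φ x y)
    {B : Finset F} : B ∈ blocksThrough φ x y ∧ z ∈ B ↔ B = {x + y + z, x, y, z} := by
  obtain ⟨hxz, hyz, hfix⟩ := hz
  constructor
  · rintro ⟨⟨hblock, hx, hy⟩, hz⟩
    have hsub : {x, y, z} ⊆ B := by simp [insert_subset_iff, *]
    exact ((isBlock_iff_of_subset hxy hxz hyz hsub).1 hblock).1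
  · rintro rfl
    have hblock := (isBlock_iff_of_subset hxy hxz hyz (subset_insert _ _)).2 ⟨rfl, hfix⟩
    simp [blocksThrough, hblock]

theorem two_mul_ncard_blocksThrough [Finite F] (hxy : x ≠ y) :
    2 * (blocksThrough φ x y).ncard = (thirdPoints φ x y).ncard := by
  classical
  let blocks := (blocksThrough φ x y).toFinite.toFinset
  let points := (thirdPoints φ x y).toFinite.toFinset
  have points_on_block (B) (hB : B ∈ blocks) :
      #(points.bipartiteAbove (fun B z => z ∈ B) B) = 2 := by
    rw [Set.Finite.mem_toFinset] at hB
    have hsdiff : points.bipartiteAbove (fun B z => z ∈ B) B = B \ {x, y} := by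
      ext z
      simp only [points, mem_bipartiteAbove, Set.Finite.mem_toFinset, mem_sdiff, mem_insert,
        mem_singleton, not_or, eq_comm (a := z), and_comm (b := z ∈ B)]
      exact and_congr_right (mem_thirdPoints_iff_of_mem_blocksThrough hxy hB)
    rw [hsdiff, card_sdiff_of_subset (by simp [insert_subset_iff, hB.2]), hB.1.1, card_pair hxy]
  have blocks_through_point (z) (hz : z ∈ points) :
      #(blocks.bipartiteBelow (fun B z => z ∈ B) z) = 1 := by
    rw [Set.Finite.mem_toFinset] at hz
    refine card_eq_one.2 ⟨{x + y + z, x, y, z}, ?_⟩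
    ext B
    simpa [blocks] using mem_blocksThrough_and_mem_iff hxy hz
  have double_count := card_mul_eq_card_mul _ points_on_block blocks_through_point
  rwa [← Set.ncard_eq_toFinset_card, ← Set.ncard_eq_toFinset_card, mul_one,
    mul_comm] at double_count

theorem ncard_blocksThrough_iterateFrobenius [Finite F] {m : ℕ} (hcard : Nat.card F = 2 ^ m)
    (e : ℕ) (hxy : x ≠ y) :
    (blocksThrough (iterateFrobenius F 2 e) x y).ncard = 2 ^ (m.gcd e - 1) - 1 := by
  have hm : m ≠ 0 := by
    rintro rfl
    exact (hcard ▸ Finite.one_lt_card (α := F)).ne' (pow_zero 2)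
  have hgcd : 2 * 2 ^ (m.gcd e - 1) = 2 ^ m.gcd e :=
    mul_pow_sub_one (Nat.gcd_pos_of_pos_left e (Nat.pos_of_ne_zero hm)).ne' 2
  have hblocks := two_mul_ncard_blocksThrough (φ := iterateFrobenius F 2 e) hxy
  have hpoints := ncard_thirdPoints_add_two (φ := iterateFrobenius F 2 e) hxy
  simp only [iterateFrobenius_def, ncard_setOf_pow_pow_eq_self hcard] at hpoints
  omega

end Blocks

section PrimitiveElement

/-- The point of `F` labelling a coordinate of the extended code of length `n`: position `i` is
labelled by `α ^ i`, and the last position, the parity bit, by `0`. -/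
def locator {F : Type*} [MonoidWithZero F] {n : ℕ} (α : F) (i : Fin n) : F :=
  if (i : ℕ) < n - 1 then α ^ (i : ℕ) else 0

theorem locator_bijective {F : Type*} [GroupWithZero F] [Finite F] {n : ℕ} {α : F}
    (hn : Nat.card F = n) (hα : orderOf α = n - 1) :
    Function.Bijective (locator α : Fin n → F) := by
  have one_lt : 1 < n := hn ▸ Finite.one_lt_card
  have hα0 : α ≠ 0 := by
    rintro rfl
    rw [orderOf_zero] at hα
    omega
  refine (Nat.bijective_iff_injective_and_card _).2 ⟨fun i j hij => ?_, by simp [hn]⟩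
  simp only [locator] at hij
  split_ifs at hij with hi hj hj
  · exact Fin.ext (pow_injOn_Iio_orderOf (by simpa [hα] using hi) (by simpa [hα] using hj) hij)
  · exact absurd hij (pow_ne_zero _ hα0)
  · exact absurd hij.symm (pow_ne_zero _ hα0)
  · omega

theorem exists_pow_eq_of_orderOf_eq_card_sub_one {F : Type*} [GroupWithZero F] [Finite F] {α x : F}
    (hα : orderOf α = Nat.card F - 1) (hx : x ≠ 0) : ∃ k, α ^ k = x := by
  obtain ⟨i, rfl⟩ := (locator_bijective rfl hα).2 x
  rw [locator, ite_ne_right_iff] at hx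
  exact ⟨i, (if_pos hx.1).symm⟩

theorem eq_id_of_map_eq_mul_map {F : Type*} [Field F] [CharP F 2] {σ φ : F →+* F}
    (h : ∀ x, σ x = x * φ x) : φ = RingHom.id F := by
  ext x
  -- Additivity of `x ↦ x * φ x` at the pair `x`, `1` leaves `x + φ x = 0`.
  have hadd := h (x + 1)
  simp only [map_add, map_one, h x] at hadd
  exact (CharTwo.add_eq_zero.1 (by linear_combination -hadd)).symm

theorem eq_id_of_map_generator_eq_mul_map {F : Type*} [Field F] [Finite F] [CharP F 2]
    {σ φ : F →+* F} {α : F} (hα : orderOf α = Nat.card F - 1) (h : σ α = α * φ α) :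
    φ = RingHom.id F := by
  refine eq_id_of_map_eq_mul_map (σ := σ) fun x => ?_
  rcases eq_or_ne x 0 with rfl | hx
  · simp
  · obtain ⟨k, rfl⟩ := exists_pow_eq_of_orderOf_eq_card_sub_one hα hx
    rw [map_pow, h, mul_pow, map_pow]

theorem isCoprime_minpoly_of_not_isConjRoot {K L : Type*} [Field K] [Field L] [Algebra K L]
    {x y : L} (hx : IsIntegral K x) (hy : IsIntegral K y) (h : ¬ IsConjRoot K x y) :
    IsCoprime (minpoly K x) (minpoly K y) := by
  rw [(minpoly.irreducible hx).coprime_iff_not_dvd]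
  exact fun hdvd => h <| eq_of_monic_of_associated (minpoly.monic hx) (minpoly.monic hy) <|
    (minpoly.irreducible hx).associated_of_dvd (minpoly.irreducible hy) hdvd

theorem isCoprime_minpoly_mul_map {K F : Type*} [Field K] [Field F] [Finite F] [CharP F 2]
    [Algebra K F] {φ : F →+* F} (hφ : φ ≠ RingHom.id F) {α : F}
    (hα : orderOf α = Nat.card F - 1) :
    IsCoprime (minpoly K α) (minpoly K (α * φ α)) := by
  refine isCoprime_minpoly_of_not_isConjRoot (.of_finite K _) (.of_finite K _) fun h => hφ ?_
  obtain ⟨σ, hσ⟩ := isConjRoot_iff_exists_algEquiv.1 h.symm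
  exact eq_id_of_map_generator_eq_mul_map (σ := (σ : F →+* F)) hα hσ

end PrimitiveElement

section Code

variable {ι : Type*} [Fintype ι] [DecidableEq ι]

/-- Binary vectors correspond to subsets of the coordinate set through their supports; the inverse
is the indicator vector. -/
def supportEquiv : (ι → ZMod 2) ≃ Finset ι where
  toFun c := {i | c i ≠ 0}
  invFun S i := if i ∈ S then 1 else 0
  left_inv c := by
    have indicator_eq : ∀ a : ZMod 2, (if a ≠ 0 then 1 else 0) = a := by decide
    ext i
    simpa using indicator_eq (c i)
  right_inv S := by ext; simp

theorem mem_supportEquiv {c : ι → ZMod 2} {i : ι} : i ∈ supportEquiv c ↔ c i ≠ 0 := by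
  simp [supportEquiv]

theorem hammingNorm_eq_card_supportEquiv (c : ι → ZMod 2) :
    hammingNorm c = #(supportEquiv c) := rfl

theorem sum_smul_eq_sum_supportEquiv {M : Type*} [AddCommGroup M] [Module (ZMod 2) M]
    (c : ι → ZMod 2) (f : ι → M) : ∑ i, c i • f i = ∑ i ∈ supportEquiv c, f i := by
  obtain ⟨S, rfl⟩ := supportEquiv.symm.surjective c
  rw [Equiv.apply_symm_apply]
  simp [supportEquiv]

theorem minpoly_pow_dvd_codePoly_iff {F : Type*} [Field F] [Algebra (ZMod 2) F] (α : F) {k : ℕ}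
    (hk : k ≠ 0) {n : ℕ} (c : Fin n → ZMod 2) :
    minpoly (ZMod 2) (α ^ k) ∣
        codePoly (fun i : Fin (n - 1) => c (Fin.castLE (Nat.sub_le _ _) i)) ↔
      ∑ i ∈ supportEquiv c, locator α i ^ k = 0 := by
  rw [minpoly.dvd_iff, ← sum_smul_eq_sum_supportEquiv]
  cases n with
  | zero => simp [codePoly]
  | succ n =>
    have locator_last : locator α (Fin.last n) = 0 := by simp [locator]
    have locator_castSucc (i : Fin n) : locator α i.castSucc = α ^ (i : ℕ) := by simp [locator]
    have aeval_codePoly : aeval (α ^ k) (codePoly fun i : Fin n => c i.castSucc) =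
        ∑ i : Fin n, c i.castSucc • (α ^ (i : ℕ)) ^ k := by
      simp [codePoly, Algebra.smul_def, ← pow_mul, mul_comm k]
    rw [Fin.sum_univ_castSucc, locator_last, zero_pow hk, smul_zero, add_zero]
    simp only [locator_castSucc, ← aeval_codePoly]
    rfl

variable {m e : ℕ} {α : GaloisField 2 m}

theorem mem_CEbar_iff {c : Fin (2 ^ m) → ZMod 2}
    (hcop : IsCoprime (minpoly (ZMod 2) α) (minpoly (ZMod 2) (α ^ (1 + 2 ^ e)))) :
    c ∈ CEbar m e α ↔ (∑ i ∈ supportEquiv c, locator α i = 0 ∧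
      ∑ i ∈ supportEquiv c, locator α i ^ (1 + 2 ^ e) = 0) ∧ Even #(supportEquiv c) := by
  have hsum := minpoly_pow_dvd_codePoly_iff α one_ne_zero c
  have hpow := minpoly_pow_dvd_codePoly_iff α (k := 1 + 2 ^ e) (by positivity) c
  have hparity : ∑ i, c i = (#(supportEquiv c) : ZMod 2) := by
    simpa using sum_smul_eq_sum_supportEquiv c fun _ => (1 : ZMod 2)
  simp only [pow_one] at hsum
  rw [← hsum, ← hpow, ← ZMod.natCast_eq_zero_iff_even, ← hparity]
  exact and_congr_left' ⟨fun h => ⟨(dvd_mul_right _ _).trans h, (dvd_mul_left _ _).trans h⟩,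
    fun h => hcop.mul_dvd h.1 h.2⟩

theorem mem_CEbar_and_hammingNorm_eq_four_iff {c : Fin (2 ^ m) → ZMod 2}
    (hcop : IsCoprime (minpoly (ZMod 2) α) (minpoly (ZMod 2) (α ^ (1 + 2 ^ e))))
    {ℓ : Fin (2 ^ m) ≃ GaloisField 2 m} (hℓ : ⇑ℓ = locator α) :
    c ∈ CEbar m e α ∧ hammingNorm c = 4 ↔
      IsBlock (iterateFrobenius (GaloisField 2 m) 2 e) (ℓ.finsetCongr (supportEquiv c)) := by
  have heven : #(supportEquiv c) = 4 → Even #(supportEquiv c) := fun h => h ▸ by decide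
  rw [mem_CEbar_iff hcop, hammingNorm_eq_card_supportEquiv]
  simp only [IsBlock, Equiv.finsetCongr_apply, card_map, sum_map, Equiv.coe_toEmbedding, hℓ,
    iterateFrobenius_def, pow_add, pow_one]
  tauto

end Code

theorem steiner_system_S_2_4_2m_of_mod_four_eq_zero_general
    (m e : ℕ) (hme : ¬ m ∣ e) (α : GaloisField 2 m) (hα : orderOf α = 2 ^ m - 1) :
    ∀ T : Finset (Fin (2 ^ m)), T.card = 2 →
      {c : Fin (2 ^ m) → ZMod 2 |
        c ∈ CEbar m e α ∧ hammingNorm c = 4 ∧ ∀ i ∈ T, c i ≠ 0}.ncard =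
          2 ^ (m.gcd e - 1) - 1 := by
  intro T hT
  obtain ⟨i, j, hij, rfl⟩ := card_eq_two.1 hT
  have hm : m ≠ 0 := by
    rintro rfl
    exact hij (Subsingleton.elim (α := Fin 1) i j)
  have hcard := GaloisField.card 2 m hm
  have hcop := isCoprime_minpoly_mul_map (K := ZMod 2) (iterateFrobenius_ne_id hcard hme)
    (hcard.symm ▸ hα)
  rw [iterateFrobenius_def, ← pow_succ', add_comm] at hcop
  let ℓ := Equiv.ofBijective _ (locator_bijective hcard hα)
  have hblocks :
      {c | c ∈ CEbar m e α ∧ hammingNorm c = 4 ∧ ∀ k ∈ ({i, j} : Finset _), c k ≠ 0} =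
      supportEquiv.trans ℓ.finsetCongr ⁻¹'
        blocksThrough (iterateFrobenius _ 2 e) (ℓ i) (ℓ j) := by
    ext c
    rw [Set.mem_ofPred_eq, ← and_assoc, mem_CEbar_and_hammingNorm_eq_four_iff hcop (ℓ := ℓ) rfl]
    simp [blocksThrough, mem_supportEquiv]
  rw [hblocks, Set.ncard_preimage_of_injective_subset_range (Equiv.injective _) (by simp),
    ncard_blocksThrough_iterateFrobenius hcard e (ℓ.injective.ne hij)]

/-- For `m ≡ 0 (mod 4)`, `m ≥ 4`, `2 ≤ e ≤ m/2` with `gcd(m,e) = 2`,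
the supports of the weight-4 codewords of `C̄_E` form a Steiner system `S(2, 4, 2^m)`:
every 2-element subset of the `2^m` coordinate positions is contained in the support of
exactly one codeword of Hamming weight 4. -/
theorem steiner_system_S_2_4_2m_of_mod_four_eq_zero
    (m e : ℕ) (hm4 : m % 4 = 0) (hm : 4 ≤ m)
    (he2 : 2 ≤ e) (heM : 2 * e ≤ m) (hgcd : Nat.gcd m e = 2)
    (α : GaloisField 2 m) (hα : orderOf α = 2 ^ m - 1) :
    ∀ T : Finset (Fin (2 ^ m)), T.card = 2 →
      {c : Fin (2 ^ m) → ZMod 2 |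
        c ∈ CEbar m e α ∧ hammingNorm c = 4 ∧ ∀ i ∈ T, c i ≠ 0}.ncard = 1 := by
  intro T hT
  have hme : ¬ m ∣ e := fun h => by have := Nat.gcd_eq_left h; omega
  simpa [hgcd] using steiner_system_S_2_4_2m_of_mod_four_eq_zero_general m e hme α hα T hT
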